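/- Let n ≥ 1 and let f_1, …, f_n ∈ L¹([0,1]) be real-valued. Assume there exists p ∈ (0,1) such that f_1, …, f_n are linearly independent almost everywhere on [0,p] and linearly independent almost everywhere on [p,1]. Then there exists a real-valued function g ∈ C_c^∞((0,1); ℝ) such that ∫_0^1 f_j(x) e^{i g(x)} dx = 0 for all 1 ≤ j ≤ n. -/

import Mathlib

/-!
The phase `g` is found as a small perturbation of a rapidly rotating one.

* By the Riemann–Lebesgue lemma, `∫ f_j e^{iax} → 0` as `a → ∞`, so `x ↦ a x`, cut off near the
  endpoints of `[0,1]` so as to have compact support in `(0,1)`, is an approximate solution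
  (`exists_phase`).
* Linear independence on `(0,1)` gives test functions `ψ_k` with `∫ f_j ψ_k = δ_{jk}` (`exists_dual`).
  Since `2 cos θ e^{iθ} = 1 + e^{2iθ}` and `2 sin θ e^{iθ} = i (1 - e^{2iθ})`, Riemann–Lebesgue
  again shows that perturbing the phase by
  `u_z = ∑ k, 2 (Re z_k cos (a x) + Im z_k sin (a x)) ψ_k` for `z ∈ ℂⁿ` changes
  `∫ f_j e^{ig}` to first order by nearly `i z_j` (`linear_part`).
* The second-order error is controlled by bounds on `ψ_k` and `f_j` only, uniformly in `a`
  (`nonlinear_part`). Hence, with `F_j(z) = ∫ f_j e^{i(g + u_z)}`, the map `z ↦ z + i F(z)` is a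
  contraction of a ball whose radius does not depend on `a`, and for `a` large it maps that ball
  to itself. Its fixed point `z` satisfies `F(z) = 0`, so `g + u_z` is the required phase.
-/

open MeasureTheory Complex Filter Topology
open scoped ContDiff

namespace SmoothHobbyRice

/-- Smooth real functions whose topological support lies in `(0,1)`. Compactness of the support is
automatic, the topological support being closed in `ℝ` and contained in `[0,1]`. -/
def testFn : Submodule ℝ (ℝ → ℝ) where
  carrier := {g | ContDiff ℝ ∞ g ∧ tsupport g ⊆ Set.Ioo 0 1}
  add_mem' := by
    rintro a b ⟨ha, ha'⟩ ⟨hb, hb'⟩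
    exact ⟨ha.add hb, (tsupport_add a b).trans (Set.union_subset ha' hb')⟩
  zero_mem' := ⟨contDiff_const, by simp [tsupport]⟩
  smul_mem' := by
    rintro c a ⟨ha, ha'⟩
    exact ⟨contDiff_const.smul ha, (tsupport_smul_subset_right (fun _ => c) a).trans ha'⟩

lemma testFn.hasCompactSupport {g : ℝ → ℝ} (hg : g ∈ testFn) : HasCompactSupport g :=
  isCompact_Icc.of_isClosed_subset (isClosed_tsupport g)
    (hg.2.trans (Set.Ioo_subset_Icc_self : _ ⊆ Set.Icc (0 : ℝ) 1))

lemma testFn.mul_left {a g : ℝ → ℝ} (ha : ContDiff ℝ ∞ a) (hg : g ∈ testFn) :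
    (fun x => a x * g x) ∈ testFn :=
  ⟨ha.mul hg.1, (tsupport_mul_subset_right).trans hg.2⟩

lemma testFn.bounded {g : ℝ → ℝ} (hg : g ∈ testFn) : ∃ C, ∀ x, |g x| ≤ C :=
  (testFn.hasCompactSupport hg).exists_bound_of_continuous hg.1.continuous

/-- Lebesgue measure on `(0,1]`, the measure underlying `∫ x in 0..1`. -/
noncomputable abbrev μ : Measure ℝ := volume.restrict (Set.Ioc 0 1)

/-- Plateau functions exhausting `(0,1)`. -/
lemma exists_cutoff : ∃ χ : ℕ → ℝ → ℝ, (∀ m, χ m ∈ testFn) ∧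
    ∀ x ∈ Set.Ioo (0 : ℝ) 1, ∀ᶠ m in atTop, χ m x = 1 := by
  let b : ℕ → ContDiffBump (1 / 2 : ℝ) := fun m =>
    { rIn := 1 / 2 - 1 / (m + 3)
      rOut := 1 / 2 - 1 / (2 * (m + 3))
      rIn_pos := by
        rw [sub_pos]
        exact one_div_lt_one_div_of_lt (by norm_num) (by linarith [(Nat.cast_nonneg m : (0:ℝ) ≤ m)])
      rIn_lt_rOut := by
        have : (1 : ℝ) / (2 * (m + 3)) < 1 / (m + 3) :=
          one_div_lt_one_div_of_lt (by positivity) (by linarith [(Nat.cast_nonneg m : (0:ℝ) ≤ m)])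
        linarith }
  refine ⟨fun m => b m, fun m => ⟨(b m).contDiff, ?_⟩, fun x hx => ?_⟩
  · rw [(b m).tsupport_eq, Real.closedBall_eq_Icc]
    have : (0 : ℝ) < 1 / (2 * (m + 3)) := by positivity
    intro x hx
    simp only [b, Set.mem_Icc] at hx
    constructor <;> linarith [hx.1, hx.2]
  · have h1 : Tendsto (fun m : ℕ => (1 : ℝ) / (m + 3)) atTop (𝓝 0) := by
      have := (tendsto_const_div_atTop_nhds_zero_nat (1 : ℝ)).comp (tendsto_add_atTop_nat 3)
      refine this.congr fun m => ?_
      simp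
    have h2 : 0 < min x (1 - x) := lt_min hx.1 (by linarith [hx.2])
    filter_upwards [h1.eventually_lt_const h2] with m hm
    apply (b m).one_of_mem_closedBall
    rw [Real.closedBall_eq_Icc]
    simp only [b, Set.mem_Icc]
    have := hm.trans_le (min_le_left _ _)
    have := hm.trans_le (min_le_right _ _)
    constructor <;> linarith

/-- Riemann–Lebesgue on `(0,1]`. No integrability is needed: for non-integrable `h` the integrals
all take the junk value `0`. -/
lemma riemannLebesgue (h : ℝ → ℂ) :
    Tendsto (fun a : ℝ => ∫ x, h x * cexp (I * (a * x : ℝ)) ∂μ) atTop (𝓝 0) := by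
  have key := Real.tendsto_integral_exp_smul_cocompact ((Set.Ioc (0 : ℝ) 1).indicator h)
  have hc : Tendsto (fun a : ℝ => -(a / (2 * Real.pi))) atTop (cocompact ℝ) :=
    (tendsto_neg_atTop_atBot.comp (tendsto_id.atTop_div_const (by positivity))).mono_right
      atBot_le_cocompact
  refine (key.comp hc).congr fun a => ?_
  simp only [Function.comp]
  rw [← integral_indicator measurableSet_Ioc]
  congr 1
  ext x
  by_cases hx : x ∈ Set.Ioc (0 : ℝ) 1
  · simp only [hx, Set.indicator_of_mem, Circle.smul_def, Real.fourierChar_apply, smul_eq_mul]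
    rw [mul_comm]
    congr 2
    have : (Real.pi : ℂ) ≠ 0 := by exact_mod_cast Real.pi_ne_zero
    push_cast
    field_simp
  · simp [hx]

lemma integrable_mul_exp {h : ℝ → ℂ} (hh : Integrable h μ) {g : ℝ → ℝ} (hg : Continuous g) :
    Integrable (fun x => h x * cexp (I * g x)) μ := by
  refine hh.mul_bdd (c := 1) (by fun_prop) ?_
  exact Eventually.of_forall fun x => (norm_exp_I_mul_ofReal _).le

lemma tendsto_cutoff {χ : ℕ → ℝ → ℝ} (hχ : ∀ m, χ m ∈ testFn)
    (hχ' : ∀ x ∈ Set.Ioo (0 : ℝ) 1, ∀ᶠ m in atTop, χ m x = 1) {h : ℝ → ℂ}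
    (hh : Integrable h μ) (a : ℝ) :
    Tendsto (fun m => ∫ x, h x * cexp (I * (a * x * χ m x : ℝ)) ∂μ) atTop
      (𝓝 (∫ x, h x * cexp (I * (a * x : ℝ)) ∂μ)) := by
  refine tendsto_integral_of_dominated_convergence (fun x => ‖h x‖) (fun m => ?_) hh.norm ?_ ?_
  · have := (hχ m).1.continuous
    exact (integrable_mul_exp hh (g := fun x => a * x * χ m x) (by fun_prop)).1
  · intro m
    refine Eventually.of_forall fun x => ?_
    rw [norm_mul, norm_exp_I_mul_ofReal, mul_one]
  · have hμ : μ = volume.restrict (Set.Ioo (0 : ℝ) 1) := restrict_Ioo_eq_restrict_Ioc.symm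
    rw [hμ]
    refine (ae_restrict_mem measurableSet_Ioo).mono fun x hx => ?_
    refine tendsto_const_nhds.congr' ?_
    filter_upwards [hχ' x hx] with m hm
    rw [hm, mul_one]

lemma norm_exp_sub_exp_sub_le {r u w : ℝ} (hu : |u| ≤ r) (hw : |w| ≤ r) :
    ‖cexp (I * u) - cexp (I * w) - I * (u - w)‖ ≤ r * |u - w| := by
  have hd : ∀ s ∈ Set.Icc (-r) r, HasDerivWithinAt (fun s : ℝ => cexp (I * s) - I * s)
      (cexp (I * s) * I - I) (Set.Icc (-r) r) s := by
    intro s _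
    have h1 : HasDerivAt (fun s : ℝ => I * (s : ℂ)) I s := by
      simpa using (Complex.ofRealCLM.hasDerivAt (x := s)).const_mul I
    exact (h1.cexp.sub h1).hasDerivWithinAt
  have hb : ∀ s ∈ Set.Icc (-r) r, ‖cexp (I * s) * I - I‖ ≤ r := by
    intro s hs
    have : cexp (I * s) * I - I = (cexp (I * s) - 1) * I := by ring
    rw [this, norm_mul, norm_I, mul_one]
    exact Real.norm_exp_I_mul_ofReal_sub_one_le.trans (abs_le.2 hs)
  have := (convex_Icc (-r) r).norm_image_sub_le_of_norm_hasDerivWithin_le hd hb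
    (abs_le.1 hw) (abs_le.1 hu)
  refine le_trans (le_of_eq ?_) this
  congr 1
  ring

/-- By duality, linear independence makes `ψ ↦ (∫ f_j ψ)_j` surjective on test functions, which
gives a dual system for `f`. -/
lemma exists_dual {n : ℕ} {f : Fin n → ℝ → ℝ} (hf : ∀ j, Integrable (f j) μ)
    (hind : ∀ a : Fin n → ℝ, (∀ᵐ x, x ∈ Set.Ioo (0 : ℝ) 1 → ∑ j, a j * f j x = 0) → a = 0) :
    ∃ ψ : Fin n → ℝ → ℝ, (∀ k, ψ k ∈ testFn) ∧
      ∀ j k, ∫ x, f j x * ψ k x ∂μ = if j = k then 1 else 0 := by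
  have hint : ∀ j, ∀ ψ ∈ testFn, Integrable (fun x => f j x * ψ x) μ := by
    intro j ψ hψ
    obtain ⟨C, hC⟩ := testFn.bounded hψ
    exact (hf j).mul_bdd (c := C) hψ.1.continuous.aestronglyMeasurable
      (Eventually.of_forall hC)
  let T : testFn →ₗ[ℝ] (Fin n → ℝ) :=
    { toFun := fun ψ j => ∫ x, f j x * ψ.1 x ∂μ
      map_add' := by
        intro a b
        ext j
        simp only [Submodule.coe_add, Pi.add_apply, mul_add]
        exact integral_add (hint j _ a.2) (hint j _ b.2)
      map_smul' := by
        intro c a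
        ext j
        simp only [Submodule.coe_smul, Pi.smul_apply, smul_eq_mul, RingHom.id_apply]
        rw [← integral_const_mul]
        congr 1
        ext x
        ring }
  have hT : LinearMap.range T = ⊤ := by
    by_contra hne
    obtain ⟨φ, hφ0, hφ⟩ := (LinearMap.range T).exists_le_ker_of_lt_top (lt_top_iff_ne_top.2 hne)
    apply hφ0
    let a : Fin n → ℝ := fun j => φ (Pi.single j 1)
    have hφa : ∀ v, φ v = ∑ j, a j * v j := by
      intro v
      conv_lhs => rw [pi_eq_sum_univ' v]
      simp [a, map_sum, mul_comm]
    have ha : a = 0 := by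
      apply hind
      have hI : IntegrableOn (fun x => ∑ j, a j * f j x) (Set.Ioo 0 1) := by
        have : Integrable (fun x => ∑ j, a j * f j x) μ :=
          integrable_finsetSum _ fun j _ => (hf j).const_mul _
        exact IntegrableOn.mono_set this Set.Ioo_subset_Ioc_self
      refine isOpen_Ioo.ae_eq_zero_of_integral_contDiff_smul_eq_zero hI.locallyIntegrableOn ?_
      intro g hg _ hgs
      have hgt : g ∈ testFn := ⟨hg, hgs⟩
      have h0 : φ (T ⟨g, hgt⟩) = 0 := hφ ⟨_, rfl⟩
      rw [hφa] at h0
      have h1 : ∫ x, g x • ∑ j, a j * f j x = ∫ x, g x • ∑ j, a j * f j x ∂μ := by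
        refine (setIntegral_eq_integral_of_forall_compl_eq_zero fun x hx => ?_).symm
        have : g x = 0 := by
          by_contra hgx
          exact hx (Set.Ioo_subset_Ioc_self (hgs (subset_tsupport g hgx)))
        simp [this]
      rw [h1, ← h0]
      simp only [T, LinearMap.coe_mk, AddHom.coe_mk, ← integral_const_mul]
      rw [← integral_finsetSum _ fun j _ => (hint j g hgt).const_mul _]
      congr 1
      ext x
      rw [smul_eq_mul, Finset.mul_sum]
      exact Finset.sum_congr rfl fun j _ => by ring
    ext v
    simp [a, funext_iff] at ha
    simp [ha]
  have hsurj := LinearMap.range_eq_top.1 hT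
  choose ψ hψ using fun k : Fin n => hsurj (fun j => if j = k then 1 else 0)
  exact ⟨fun k => (ψ k).1, fun k => (ψ k).2, fun j k => congrFun (hψ k) j⟩

/-- A phase `g` (a truncation of `x ↦ a x` with `a` large) that almost annihilates all the `f_j`,
together with perturbation directions `c_k`, `s_k` (namely `cos (a x) ψ_k`, `sin (a x) ψ_k`) along
which the first variation of `∫ f_j e^{ig}` is almost `i/2` and `-1/2` times the identity matrix.
The bound `B` on the directions does not depend on the accuracy `δ`. -/
lemma exists_phase {n : ℕ} {f ψ : Fin n → ℝ → ℝ} (hf : ∀ j, Integrable (f j) μ)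
    (hψ : ∀ k, ψ k ∈ testFn) (hdual : ∀ j k, ∫ x, f j x * ψ k x ∂μ = if j = k then 1 else 0)
    {B : ℝ} (hB : ∀ k x, |ψ k x| ≤ B) {δ : ℝ} (hδ : 0 < δ) :
    ∃ (g : ℝ → ℝ) (c s : Fin n → ℝ → ℝ), g ∈ testFn ∧ (∀ k, c k ∈ testFn) ∧ (∀ k, s k ∈ testFn) ∧
      (∀ k x, |c k x| ≤ B) ∧ (∀ k x, |s k x| ≤ B) ∧
      (∀ j, ‖∫ x, (f j x : ℂ) * cexp (I * g x) ∂μ‖ ≤ δ) ∧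
      (∀ j k, ‖2 * ∫ x, ((f j x * c k x : ℝ) : ℂ) * cexp (I * g x) ∂μ
        - (if j = k then 1 else 0)‖ ≤ δ) ∧
      (∀ j k, ‖2 * ∫ x, ((f j x * s k x : ℝ) : ℂ) * cexp (I * g x) ∂μ
        - I * (if j = k then 1 else 0)‖ ≤ δ) := by
  obtain ⟨χ, hχ, hχ'⟩ := exists_cutoff
  have hint : ∀ j, ∀ q ∈ testFn, Integrable (fun x => ((f j x * q x : ℝ) : ℂ)) μ := by
    intro j q hq
    obtain ⟨C, hC⟩ := testFn.bounded hq
    exact ((hf j).mul_bdd (c := C) hq.1.continuous.aestronglyMeasurable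
      (Eventually.of_forall hC)).ofReal
  have hct : ∀ (a : ℝ) (k : Fin n), (fun x => Real.cos (a * x) * ψ k x) ∈ testFn := fun a k =>
    testFn.mul_left (Real.contDiff_cos.comp (contDiff_const.mul contDiff_id)) (hψ k)
  have hst : ∀ (a : ℝ) (k : Fin n), (fun x => Real.sin (a * x) * ψ k x) ∈ testFn := fun a k =>
    testFn.mul_left (Real.contDiff_sin.comp (contDiff_const.mul contDiff_id)) (hψ k)
  have hdualC : ∀ j k, ∫ x, ((f j x * ψ k x : ℝ) : ℂ) ∂μ = if j = k then 1 else 0 := by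
    intro j k
    have h := integral_ofReal (𝕜 := ℂ) (μ := μ) (f := fun x => f j x * ψ k x)
    rw [hdual] at h
    refine h.trans ?_
    split_ifs <;> simp
  have hdouble : ∀ j k, Tendsto (fun a : ℝ =>
      ∫ x, ((f j x * ψ k x : ℝ) : ℂ) * cexp (I * (2 * a * x : ℝ)) ∂μ) atTop (𝓝 0) := by
    intro j k
    exact (riemannLebesgue fun x => ((f j x * ψ k x : ℝ) : ℂ)).comp
      (tendsto_id.const_mul_atTop (by norm_num : (0 : ℝ) < 2))
  have hexp2 : ∀ j k (a : ℝ), Integrable (fun x =>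
      ((f j x * ψ k x : ℝ) : ℂ) * cexp (I * (2 * a * x : ℝ))) μ := fun j k a =>
    integrable_mul_exp (hint j _ (hψ k)) (g := fun x => 2 * a * x) (by fun_prop)
  -- `2 cos θ e^{iθ} = 1 + e^{2iθ}`
  have hcos : ∀ j k, Tendsto (fun a : ℝ => 2 * ∫ x, ((f j x * (Real.cos (a * x) * ψ k x) : ℝ) : ℂ)
      * cexp (I * (a * x : ℝ)) ∂μ) atTop (𝓝 (if j = k then 1 else 0)) := by
    intro j k
    have := (hdouble j k).const_add (if j = k then 1 else 0 : ℂ)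
    rw [add_zero] at this
    refine this.congr fun a => ?_
    rw [← hdualC, ← integral_add (hint j _ (hψ k)) (hexp2 j k a), ← integral_const_mul]
    congr 1
    ext x
    have e1 : cexp (I * (2 * a * x : ℝ)) = cexp (I * (a * x : ℝ)) * cexp (I * (a * x : ℝ)) := by
      rw [← Complex.exp_add]; push_cast; ring_nf
    have e2 : cexp (-(I * (a * x : ℝ))) * cexp (I * (a * x : ℝ)) = 1 := by
      rw [← Complex.exp_add]; simp
    rw [e1]
    push_cast at e2 ⊢
    rw [Complex.cos, show -(a * x : ℂ) * I = -(I * (a * x)) by ring, mul_comm (a * x : ℂ) I]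
    linear_combination (-(f j x * ψ k x : ℂ)) * e2
  -- `2 sin θ e^{iθ} = i (1 - e^{2iθ})`
  have hsin : ∀ j k, Tendsto (fun a : ℝ => 2 * ∫ x, ((f j x * (Real.sin (a * x) * ψ k x) : ℝ) : ℂ)
      * cexp (I * (a * x : ℝ)) ∂μ) atTop (𝓝 (I * (if j = k then 1 else 0))) := by
    intro j k
    have := ((hdouble j k).const_sub (if j = k then 1 else 0 : ℂ)).const_mul I
    rw [sub_zero] at this
    refine this.congr fun a => ?_
    rw [← hdualC, ← integral_sub (hint j _ (hψ k)) (hexp2 j k a), ← integral_const_mul,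
      ← integral_const_mul]
    congr 1
    ext x
    have e1 : cexp (I * (2 * a * x : ℝ)) = cexp (I * (a * x : ℝ)) * cexp (I * (a * x : ℝ)) := by
      rw [← Complex.exp_add]; push_cast; ring_nf
    have e2 : cexp (-(I * (a * x : ℝ))) * cexp (I * (a * x : ℝ)) = 1 := by
      rw [← Complex.exp_add]; simp
    rw [e1]
    push_cast at e2 ⊢
    rw [Complex.sin, show -(a * x : ℂ) * I = -(I * (a * x)) by ring, mul_comm (a * x : ℂ) I]
    linear_combination (-(f j x * ψ k x : ℂ) * I) * e2
  have close : ∀ {ι : Type} {l : Filter ι} {F : ι → ℂ} {z w : ℂ}, Tendsto F l (𝓝 z) →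
      ‖z - w‖ < δ → ∀ᶠ i in l, ‖F i - w‖ < δ := by
    intro ι l F z w hF hz
    exact ((hF.sub_const w).norm).eventually_lt_const hz
  have evN : ∀ᶠ a : ℝ in atTop,
      (∀ j, ‖∫ x, (f j x : ℂ) * cexp (I * (a * x : ℝ)) ∂μ - 0‖ < δ) ∧
      (∀ j k, ‖2 * ∫ x, ((f j x * (Real.cos (a * x) * ψ k x) : ℝ) : ℂ)
        * cexp (I * (a * x : ℝ)) ∂μ - (if j = k then 1 else 0)‖ < δ) ∧
      (∀ j k, ‖2 * ∫ x, ((f j x * (Real.sin (a * x) * ψ k x) : ℝ) : ℂ)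
        * cexp (I * (a * x : ℝ)) ∂μ - I * (if j = k then 1 else 0)‖ < δ) := by
    simp only [eventually_and, eventually_all]
    exact ⟨fun j => close (riemannLebesgue _) (by simpa using hδ),
      fun j k => close (hcos j k) (by simpa using hδ),
      fun j k => close (hsin j k) (by simpa using hδ)⟩
  -- The frequency is fixed before the cutoff: the cutoff needed depends on the frequency.
  obtain ⟨a, ha1, ha2, ha3⟩ := evN.exists
  have evM : ∀ᶠ m in atTop,
      (∀ j, ‖∫ x, (f j x : ℂ) * cexp (I * (a * x * χ m x : ℝ)) ∂μ - 0‖ < δ) ∧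
      (∀ j k, ‖2 * ∫ x, ((f j x * (Real.cos (a * x) * ψ k x) : ℝ) : ℂ)
        * cexp (I * (a * x * χ m x : ℝ)) ∂μ - (if j = k then 1 else 0)‖ < δ) ∧
      (∀ j k, ‖2 * ∫ x, ((f j x * (Real.sin (a * x) * ψ k x) : ℝ) : ℂ)
        * cexp (I * (a * x * χ m x : ℝ)) ∂μ - I * (if j = k then 1 else 0)‖ < δ) := by
    simp only [eventually_and, eventually_all]
    exact ⟨fun j => close (tendsto_cutoff hχ hχ' (hf j).ofReal a) (ha1 j),
      fun j k => close ((tendsto_cutoff hχ hχ' (hint j _ (hct a k)) a).const_mul 2) (ha2 j k),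
      fun j k => close ((tendsto_cutoff hχ hχ' (hint j _ (hst a k)) a).const_mul 2) (ha3 j k)⟩
  obtain ⟨m, hm1, hm2, hm3⟩ := evM.exists
  refine ⟨fun x => a * x * χ m x, fun k x => Real.cos (a * x) * ψ k x,
    fun k x => Real.sin (a * x) * ψ k x,
    testFn.mul_left (contDiff_const.mul contDiff_id) (hχ m), hct a, hst a, ?_, ?_,
    fun j => by simpa using (hm1 j).le, fun j k => (hm2 j k).le, fun j k => (hm3 j k).le⟩
  · intro k x
    rw [abs_mul]
    exact (mul_le_of_le_one_left (abs_nonneg _) (Real.abs_cos_le_one _)).trans (hB k x)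
  · intro k x
    rw [abs_mul]
    exact (mul_le_of_le_one_left (abs_nonneg _) (Real.abs_sin_le_one _)).trans (hB k x)

lemma exists_fixed {V : Type*} [NormedAddCommGroup V] [CompleteSpace V] {T : V → V} {ε : ℝ}
    (hε : 0 ≤ ε) (h0 : ‖T 0‖ ≤ ε / 2)
    (hT : ∀ z w, ‖z‖ ≤ ε → ‖w‖ ≤ ε → ‖T z - T w‖ ≤ 1 / 2 * ‖z - w‖) :
    ∃ z, T z = z := by
  have hmaps : Set.MapsTo T (Metric.closedBall 0 ε) (Metric.closedBall 0 ε) := by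
    intro z hz
    rw [mem_closedBall_zero_iff] at hz ⊢
    have h1 := hT z 0 hz (by simpa using hε)
    rw [sub_zero] at h1
    have h2 := norm_add_le (T z - T 0) (T 0)
    rw [sub_add_cancel] at h2
    linarith
  have hc : ContractingWith (1 / 2) (hmaps.restrict T _ _) := by
    refine ⟨by rw [← NNReal.coe_lt_coe]; norm_num, LipschitzWith.of_dist_le_mul ?_⟩
    rintro ⟨z, hz⟩ ⟨w, hw⟩
    rw [mem_closedBall_zero_iff] at hz hw
    simpa [Subtype.dist_eq, dist_eq_norm] using hT z w hz hw
  obtain ⟨z, -, hz, -⟩ := hc.exists_fixedPoint' Metric.isClosed_closedBall.isComplete hmaps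
    (Metric.mem_closedBall_self hε) (edist_ne_top _ _)
  exact ⟨z, hz⟩

/-- The real perturbation of the phase with complex coefficients `z`: the real parts weight the
`c k`, the imaginary parts the `s k`. The factor `2` normalises the linearisation to `i` times the
identity. -/
noncomputable def pert {n : ℕ} (c s : Fin n → ℝ → ℝ) (z : Fin n → ℂ) (x : ℝ) : ℝ :=
  ∑ k, 2 * ((z k).re * c k x + (z k).im * s k x)

lemma pert_sub {n : ℕ} (c s : Fin n → ℝ → ℝ) (z w : Fin n → ℂ) (x : ℝ) :
    pert c s (z - w) x = pert c s z x - pert c s w x := by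
  simp only [pert, ← Finset.sum_sub_distrib, Pi.sub_apply, sub_re, sub_im]
  exact Finset.sum_congr rfl fun k _ => by ring

lemma pert_mem {n : ℕ} {c s : Fin n → ℝ → ℝ} (hc : ∀ k, c k ∈ testFn) (hs : ∀ k, s k ∈ testFn)
    (z : Fin n → ℂ) : pert c s z ∈ testFn := by
  have : pert c s z = ∑ k, (2 : ℝ) • ((z k).re • c k + (z k).im • s k) := by
    ext x
    simp [pert, mul_add]
  rw [this]
  exact testFn.sum_mem fun k _ => testFn.smul_mem _
    (testFn.add_mem (testFn.smul_mem _ (hc k)) (testFn.smul_mem _ (hs k)))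

lemma abs_pert_le {n : ℕ} {c s : Fin n → ℝ → ℝ} {B : ℝ} (hc : ∀ k x, |c k x| ≤ B)
    (hs : ∀ k x, |s k x| ≤ B) (z : Fin n → ℂ) (x : ℝ) :
    |pert c s z x| ≤ 4 * n * B * ‖z‖ := by
  have : ∀ k ∈ (Finset.univ : Finset (Fin n)),
      |2 * ((z k).re * c k x + (z k).im * s k x)| ≤ 4 * B * ‖z‖ := by
    intro k _
    have h1 : |(z k).re * c k x| ≤ ‖z‖ * B := by
      rw [abs_mul]
      exact mul_le_mul ((abs_re_le_norm _).trans (norm_le_pi_norm z k)) (hc k x) (abs_nonneg _)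
        (norm_nonneg _)
    have h2 : |(z k).im * s k x| ≤ ‖z‖ * B := by
      rw [abs_mul]
      exact mul_le_mul ((abs_im_le_norm _).trans (norm_le_pi_norm z k)) (hs k x) (abs_nonneg _)
        (norm_nonneg _)
    rw [abs_mul, abs_two]
    linarith [abs_add_le ((z k).re * c k x) ((z k).im * s k x)]
  refine (Finset.abs_sum_le_sum_abs _ _).trans ((Finset.sum_le_sum this).trans (le_of_eq ?_))
  simp
  ring

/-- The linearisation of `z ↦ -i ∫ f e^{i(g + pert z)}` is within `2nδ` of the `j`-th coordinate. -/
lemma linear_part {n : ℕ} {f : ℝ → ℝ} (hf : Integrable f μ) {g : ℝ → ℝ} {c s : Fin n → ℝ → ℝ}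
    (hg : g ∈ testFn) (hc : ∀ k, c k ∈ testFn) (hs : ∀ k, s k ∈ testFn) {δ : ℝ} (j : Fin n)
    (hcδ : ∀ k, ‖2 * ∫ x, ((f x * c k x : ℝ) : ℂ) * cexp (I * g x) ∂μ
        - (if j = k then 1 else 0)‖ ≤ δ)
    (hsδ : ∀ k, ‖2 * ∫ x, ((f x * s k x : ℝ) : ℂ) * cexp (I * g x) ∂μ
        - I * (if j = k then 1 else 0)‖ ≤ δ) (z : Fin n → ℂ) :
    ‖(∫ x, ((f x * pert c s z x : ℝ) : ℂ) * cexp (I * g x) ∂μ) - z j‖ ≤ 2 * n * δ * ‖z‖ := by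
  have hint : ∀ q ∈ testFn, Integrable (fun x => ((f x * q x : ℝ) : ℂ) * cexp (I * g x)) μ := by
    intro q hq
    obtain ⟨C, hC⟩ := testFn.bounded hq
    exact integrable_mul_exp (hf.mul_bdd (c := C) hq.1.continuous.aestronglyMeasurable
      (Eventually.of_forall hC)).ofReal hg.1.continuous
  have e1 : (∫ x, ((f x * pert c s z x : ℝ) : ℂ) * cexp (I * g x) ∂μ) =
      ∑ k, ((z k).re * (2 * ∫ x, ((f x * c k x : ℝ) : ℂ) * cexp (I * g x) ∂μ) +
        (z k).im * (2 * ∫ x, ((f x * s k x : ℝ) : ℂ) * cexp (I * g x) ∂μ)) := by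
    simp only [← integral_const_mul]
    rw [Finset.sum_congr rfl fun k _ => (integral_add
      (((hint _ (hc k)).const_mul 2).const_mul ((z k).re : ℂ))
      (((hint _ (hs k)).const_mul 2).const_mul ((z k).im : ℂ))).symm]
    rw [← integral_finsetSum _ fun k _ => by
      exact (((hint _ (hc k)).const_mul 2).const_mul _).add
        (((hint _ (hs k)).const_mul 2).const_mul _)]
    congr 1
    ext x
    simp only [pert]
    push_cast
    rw [Finset.mul_sum, Finset.sum_mul]
    exact Finset.sum_congr rfl fun k _ => by ring
  have e2 : z j = ∑ k, ((z k).re * (if j = k then 1 else 0 : ℂ) +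
      (z k).im * (I * (if j = k then 1 else 0 : ℂ))) := by
    simp [Finset.sum_add_distrib, re_add_im]
  rw [e1]
  conv_lhs => rw [e2]
  rw [← Finset.sum_sub_distrib]
  have hk : ∀ k ∈ (Finset.univ : Finset (Fin n)),
      ‖((z k).re * (2 * ∫ x, ((f x * c k x : ℝ) : ℂ) * cexp (I * g x) ∂μ) +
        (z k).im * (2 * ∫ x, ((f x * s k x : ℝ) : ℂ) * cexp (I * g x) ∂μ)) -
        ((z k).re * (if j = k then 1 else 0 : ℂ) +
      (z k).im * (I * (if j = k then 1 else 0 : ℂ)))‖ ≤ 2 * δ * ‖z‖ := by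
    intro k _
    rw [add_sub_add_comm, ← mul_sub, ← mul_sub]
    refine (norm_add_le _ _).trans ?_
    rw [norm_mul, norm_mul, norm_real, norm_real]
    have h1 := mul_le_mul ((abs_re_le_norm _).trans (norm_le_pi_norm z k)) (hcδ k) (norm_nonneg _)
        (norm_nonneg _)
    have h2 := mul_le_mul ((abs_im_le_norm _).trans (norm_le_pi_norm z k)) (hsδ k) (norm_nonneg _)
        (norm_nonneg _)
    rw [Real.norm_eq_abs, Real.norm_eq_abs]
    linarith
  refine (norm_sum_le _ _).trans ((Finset.sum_le_sum hk).trans (le_of_eq ?_))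
  simp
  ring

/-- The second-order error in the phase, with a Lipschitz constant proportional to the size `r` of
the perturbations. -/
lemma nonlinear_part {f : ℝ → ℝ} (hf : Integrable f μ) {g u w : ℝ → ℝ}
    {r d : ℝ} (hr : 0 ≤ r) (hu' : ∀ x, |u x| ≤ r) (hw' : ∀ x, |w x| ≤ r)
    (hd : ∀ x, |u x - w x| ≤ d) :
    ‖∫ x, (f x : ℂ) * (cexp (I * g x) * (cexp (I * u x) - cexp (I * w x) - I * (u x - w x))) ∂μ‖
      ≤ (∫ x, |f x| ∂μ) * (r * d) := by
  rw [← integral_mul_const]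
  refine norm_integral_le_of_norm_le (hf.norm.mul_const _) (Eventually.of_forall fun x => ?_)
  rw [norm_mul, norm_mul, norm_exp_I_mul_ofReal, one_mul, norm_real, Real.norm_eq_abs]
  gcongr
  exact (norm_exp_sub_exp_sub_le (hu' x) (hw' x)).trans
    (mul_le_mul_of_nonneg_left (hd x) hr)

end SmoothHobbyRice

open SmoothHobbyRice in
/-- Smooth Hobby–Rice theorem under the additional assumption that for some `p ∈ (0,1)` the
functions are linearly independent almost everywhere on `[0,p]` and on `[p,1]`. -/
theorem smooth_hobby_rice_of_linIndep (n : ℕ) (hn : 1 ≤ n) (f : Fin n → ℝ → ℝ)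
    (hf : ∀ j, IntegrableOn (f j) (Set.Icc 0 1))
    (p : ℝ) (hp : p ∈ Set.Ioo (0:ℝ) 1)
    (hleft : ∀ a : Fin n → ℝ,
      (∀ᵐ x ∂(volume.restrict (Set.Icc 0 p)), ∑ j, a j * f j x = 0) → a = 0)
    (hright : ∀ a : Fin n → ℝ,
      (∀ᵐ x ∂(volume.restrict (Set.Icc p 1)), ∑ j, a j * f j x = 0) → a = 0) :
    ∃ g : ℝ → ℝ, ContDiff ℝ (⊤ : ℕ∞) g ∧ HasCompactSupport g ∧ tsupport g ⊆ Set.Ioo 0 1 ∧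
      ∀ j, ∫ x in (0:ℝ)..1, (f j x : ℂ) * Complex.exp (Complex.I * g x) = 0 := by
  have hfμ : ∀ j, Integrable (f j) μ := fun j => (hf j).mono_set Set.Ioc_subset_Icc_self
  have hind : ∀ a : Fin n → ℝ,
      (∀ᵐ x, x ∈ Set.Ioo (0 : ℝ) 1 → ∑ j, a j * f j x = 0) → a = 0 := by
    intro a ha
    apply hleft
    rw [← restrict_Ioo_eq_restrict_Icc, ae_restrict_iff' measurableSet_Ioo]
    exact ha.mono fun x hx hx' => hx ⟨hx'.1, hx'.2.trans hp.2⟩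
  obtain ⟨ψ, hψ, hdual⟩ := exists_dual hfμ hind
  choose Bk hBk using fun k => testFn.bounded (hψ k)
  obtain ⟨B, hB0, hB⟩ : ∃ B, 0 ≤ B ∧ ∀ k x, |ψ k x| ≤ B := by
    refine ⟨∑ k, |Bk k|, Finset.sum_nonneg fun _ _ => abs_nonneg _, fun k x => ?_⟩
    exact (hBk k x).trans ((le_abs_self _).trans
      (Finset.single_le_sum (f := fun k => |Bk k|) (fun _ _ => abs_nonneg _) (Finset.mem_univ k)))
  let M := ∑ j, ∫ x, |f j x| ∂μ
  have hMj : ∀ j, ∫ x, |f j x| ∂μ ≤ M := fun j =>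
    Finset.single_le_sum (f := fun j => ∫ x, |f j x| ∂μ)
      (fun _ _ => integral_nonneg fun _ => abs_nonneg _) (Finset.mem_univ j)
  have hM0 : 0 ≤ M := Finset.sum_nonneg fun _ _ => integral_nonneg fun _ => abs_nonneg _
  let C : ℝ := 4 * n * B
  have hC0 : 0 ≤ C := by positivity
  -- `ε` makes the quadratic error `1/4`-Lipschitz on the `ε`-ball; `δ` does the same for the
  -- linear error and bounds the value at `0` by `ε / 2`.
  let ε : ℝ := 1 / (4 * (M * C ^ 2 + 1))
  have hε0 : 0 < ε := by positivity
  have hε : M * C ^ 2 * ε ≤ 1 / 4 := by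
    have : (M * C ^ 2 + 1) * ε = 1 / 4 := by simp only [ε]; field_simp
    linarith
  let δ : ℝ := min (ε / 2) (1 / (8 * (n + 1)))
  have hδ0 : 0 < δ := lt_min (by positivity) (by positivity)
  have hδ1 : δ ≤ ε / 2 := min_le_left _ _
  have hδ2 : 2 * n * δ ≤ 1 / 4 := by
    have h1 : δ ≤ 1 / (8 * (n + 1)) := min_le_right _ _
    have h2 : 2 * (n + 1) * (1 / (8 * (n + 1))) = (1 / 4 : ℝ) := by field_simp; norm_num
    have h3 : 2 * (n + 1) * δ ≤ 2 * (n + 1) * (1 / (8 * (n + 1))) := by gcongr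
    linarith
  obtain ⟨g, c, s, hg, hc, hs, hcB, hsB, h0, hcδ, hsδ⟩ := exists_phase hfμ hψ hdual hB hδ0
  let u := pert c s
  have hu : ∀ z, u z ∈ testFn := pert_mem hc hs
  have hgc := hg.1.continuous
  have huc : ∀ z, Continuous (u z) := fun z => (hu z).1.continuous
  let F : Fin n → (Fin n → ℂ) → ℂ := fun j z => ∫ x, (f j x : ℂ) * cexp (I * (g x + u z x : ℝ)) ∂μ
  have hFint : ∀ j z, Integrable (fun x => (f j x : ℂ) * cexp (I * (g x + u z x : ℝ))) μ :=
    fun j z => integrable_mul_exp (hfμ j).ofReal (g := fun x => g x + u z x)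
      (hgc.add (huc z))
  -- A fixed point of `z ↦ z + i F(z)` is a zero of `F`.
  obtain ⟨z, hz⟩ := exists_fixed (T := fun (z : Fin n → ℂ) j => z j + I * F j z) hε0.le (by
    rw [pi_norm_le_iff_of_nonneg (by positivity)]
    intro j
    have : F j 0 = ∫ x, (f j x : ℂ) * cexp (I * g x) ∂μ := by simp [F, u, pert]
    simp only [Pi.zero_apply, zero_add, norm_mul, norm_I, one_mul, this]
    exact (h0 j).trans hδ1) (by
    intro z w hz hw
    rw [pi_norm_le_iff_of_nonneg (by positivity)]
    intro j
    have hlin := linear_part (hfμ j) hg hc hs j (hcδ j) (hsδ j) (z - w)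
    have hbd : ∀ v : Fin n → ℂ, ‖v‖ ≤ ε → ∀ x, |u v x| ≤ C * ε := fun v hv x =>
      (abs_pert_le hcB hsB v x).trans (mul_le_mul_of_nonneg_left hv hC0)
    have hnon := nonlinear_part (hfμ j) (g := g) (mul_nonneg hC0 hε0.le)
      (hbd z hz) (hbd w hw) (d := C * ‖z - w‖) (fun x => by
        rw [← pert_sub]; exact abs_pert_le hcB hsB _ x)
    have hPint : Integrable (fun x =>
        ((f j x * u (z - w) x : ℝ) : ℂ) * cexp (I * g x)) μ := by
      obtain ⟨C', hC'⟩ := testFn.bounded (hu (z - w))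
      exact integrable_mul_exp ((hfμ j).mul_bdd (c := C') (huc _).aestronglyMeasurable
        (Eventually.of_forall hC')).ofReal hgc
    have hsplit : ∫ x, (f j x : ℂ) * (cexp (I * g x) *
        (cexp (I * u z x) - cexp (I * u w x) - I * (u z x - u w x))) ∂μ =
        F j z - F j w - I * ∫ x, ((f j x * u (z - w) x : ℝ) : ℂ) * cexp (I * g x) ∂μ := by
      simp only [F]
      rw [← integral_const_mul, ← integral_sub (hFint j z) (hFint j w),
        ← integral_sub (by exact (hFint j z).sub (hFint j w)) (hPint.const_mul I)]
      congr 1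
      ext x
      simp only [u, pert_sub, ofReal_add, mul_add, Complex.exp_add, ofReal_mul, ofReal_sub]
      ring
    rw [hsplit] at hnon
    have halg : (z j + I * F j z) - (w j + I * F j w) =
        I * (F j z - F j w - I * ∫ x, ((f j x * u (z - w) x : ℝ) : ℂ) * cexp (I * g x) ∂μ)
        - ((∫ x, ((f j x * u (z - w) x : ℝ) : ℂ) * cexp (I * g x) ∂μ) - (z - w) j) := by
      simp only [Pi.sub_apply]
      linear_combination
        (∫ x, ((f j x * u (z - w) x : ℝ) : ℂ) * cexp (I * g x) ∂μ) * I_mul_I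
    simp only [Pi.sub_apply] at halg ⊢
    rw [halg]
    refine (norm_sub_le _ _).trans ?_
    rw [norm_mul, norm_I, one_mul]
    have h1 : (∫ x, |f j x| ∂μ) * (C * ε * (C * ‖z - w‖)) ≤ 1 / 4 * ‖z - w‖ := by
      calc _ ≤ M * (C * ε * (C * ‖z - w‖)) := by gcongr; exact hMj j
        _ = M * C ^ 2 * ε * ‖z - w‖ := by ring
        _ ≤ _ := by gcongr
    have h2 : 2 * n * δ * ‖z - w‖ ≤ 1 / 4 * ‖z - w‖ := by gcongr
    have h3 := hnon.trans h1
    have h4 := hlin.trans h2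
    simp only [Pi.sub_apply] at h4
    linarith)
  have hres : g + u z ∈ testFn := testFn.add_mem hg (hu z)
  refine ⟨g + u z, hres.1, testFn.hasCompactSupport hres, hres.2, fun j => ?_⟩
  rw [intervalIntegral.integral_of_le zero_le_one]
  have hj := congrFun hz j
  simp only [add_eq_left, mul_eq_zero, I_ne_zero, false_or] at hj
  exact hj
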